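/- With notation as in the context, define for a ∈ R_k and μ ∈ ℚ with mμ ∈ ℤ the element a^M_{(μ)} ∈ B_α to be the coefficient of s^{−m(μ+1)} in Φ(a), and for a,b ∈ R_k and j ∈ ℤ define a_{(j)}b := 0 if j ≥ 0 and a_{(j)}b := (1/(−j−1)!)·T^{−j−1}(a)·b if j < 0. Suppose a, b ∈ R_k satisfy σ(a) = ζ^{r}·a and σ(b) = ζ^{s'}·b for integers r, s'. Then the twisted Borcherds identity holds: for all μ, ν ∈ ℚ with μ + r/m ∈ ℤ and ν + s'/m ∈ ℤ, and all l ∈ ℤ, one has, in B_α, Σ_{i≥0} C(μ,i)·(a_{(l+i)}b)^M_{(μ+ν−i)} = Σ_{i≥0} (−1)^i·C(l,i)·( a^M_{(l+μ−i)}·b^M_{(ν+i)} + (−1)^{l+1}·b^M_{(l+ν−i)}·a^M_{(μ+i)} ), where both sums have only finitely many nonzero terms. -/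

import Mathlib

open MvPolynomial

/-- Index set for the coordinate ring `B_α = ℂ[J^g 𝔸^k]` of the twisted jet
scheme: pairs `(i,e)` with `e ≡ α_i (mod m)`. -/
abbrev TwIdx (k m : ℕ) (α : Fin k → ℕ) : Type := {q : Fin k × ℕ // q.2 % m = α q.1}

/-- The generalized binomial coefficient `C(x,i) = x(x−1)⋯(x−i+1)/i!`. -/
noncomputable def genBinom (x : ℚ) (i : ℕ) : ℚ :=
  (∏ t ∈ Finset.range i, (x - t)) / (i.factorial : ℚ)

/-- The `j`-th product `a_{(j)} b` of the commutative vertex algebra attached to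
a commutative ℂ-algebra with derivation `T`. -/
noncomputable def nProd {R : Type*} [CommRing R] [Algebra ℂ R]
    (T : Derivation ℂ R R) (a : R) (j : ℤ) (b : R) : R :=
  if 0 ≤ j then 0
  else (((-j - 1).toNat.factorial : ℂ))⁻¹ • ((⇑T)^[(-j - 1).toNat] a) * b

/-- The twisted mode `a^M_{(μ)} ∈ B_α`: the coefficient of `s^{−m(μ+1)}` in
`Φ(a)`, recorded in terms of the integer `n = mμ` (so the coefficient of
`s^{-(n+m)}`). -/
noncomputable def twMode {k m : ℕ} {α : Fin k → ℕ}
    (Φ : MvPolynomial (Fin k × ℕ) ℂ →ₐ[ℂ] LaurentSeries (MvPolynomial (TwIdx k m α) ℂ))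
    (a : MvPolynomial (Fin k × ℕ) ℂ) (n : ℤ) : MvPolynomial (TwIdx k m α) ℂ :=
  (Φ a).coeff (-(n + m))

lemma genBinom_eq (x : ℚ) (i : ℕ) : genBinom x i = Ring.choose x i := by
  rw [Ring.choose_eq_smul, genBinom, ← descPochhammer_eval_eq_prod_range, div_eq_inv_mul,
    smul_eq_mul, ← Polynomial.aeval_eq_smeval, ← descPochhammer_map (Int.castRingHom ℚ),
    Polynomial.eval_map, Polynomial.aeval_def]
  simp

lemma genBinom_nat (n i : ℕ) : genBinom (n : ℚ) i = (n.choose i : ℚ) := by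
  rw [genBinom_eq, Ring.choose_natCast]

lemma genBinom_neg (x : ℚ) (n : ℕ) : genBinom (-x) n = (-1) ^ n * genBinom (x + n - 1) n := by
  rw [genBinom, genBinom, ← Finset.prod_range_reflect (fun t : ℕ => x + n - 1 - (t : ℚ)),
    ← mul_div_assoc]
  congr 1
  have : ((-1 : ℚ)) ^ n = ∏ _t ∈ Finset.range n, (-1 : ℚ) := by simp
  rw [this, ← Finset.prod_mul_distrib]
  refine Finset.prod_congr rfl fun t ht => ?_
  have ht' := Finset.mem_range.1 ht
  rw [Nat.cast_sub (by omega), Nat.cast_sub (by omega)]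
  push_cast
  ring

lemma genBinom_vandermonde (x y : ℚ) (n : ℕ) :
    genBinom (x + y) n = ∑ i ∈ Finset.range (n + 1), genBinom x i * genBinom y (n - i) := by
  simp only [genBinom_eq]
  rw [Ring.add_choose_eq n (Commute.all x y), Finset.Nat.sum_antidiagonal_eq_sum_range_succ_mk]

section laurent
variable {S : Type*} [CommRing S]

lemma laurent_fin (A B : LaurentSeries S) (e : ℤ) :
    (Function.support fun p : ℤ => A.coeff p * B.coeff (e - p)).Finite := by
  refine (Set.finite_Icc A.order (e - B.order)).subset fun p hp => ?_
  rw [Function.mem_support] at hp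
  constructor
  · by_contra h
    exact hp (by rw [HahnSeries.coeff_eq_zero_of_lt_order (not_le.1 h), zero_mul])
  · by_contra h
    exact hp (by rw [HahnSeries.coeff_eq_zero_of_lt_order (x := B) (by omega), mul_zero])

lemma laurent_coeff_mul (A B : LaurentSeries S) (e : ℤ) :
    (A * B).coeff e = ∑ᶠ p : ℤ, A.coeff p * B.coeff (e - p) := by
  classical
  rw [HahnSeries.coeff_mul, finsum_eq_sum_of_support_subset
    (s := (Finset.antidiagonal A.isPWO_support B.isPWO_support e).image Prod.fst)]
  · rw [Finset.sum_image]
    · refine Finset.sum_congr rfl fun ij h => ?_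
      rw [Finset.mem_antidiagonal] at h
      rw [← h.2.2, add_sub_cancel_left]
    · intro x hx y hy hxy
      rw [Finset.mem_coe, Finset.mem_antidiagonal] at hx hy
      refine Prod.ext hxy ?_
      have := hx.2.2; have := hy.2.2
      omega
  · intro p hp
    rw [Function.mem_support] at hp
    simp only [Finset.coe_image, Set.mem_image, Finset.mem_coe, Finset.mem_antidiagonal]
    refine ⟨(p, e - p), ⟨?_, ?_, by ring⟩, rfl⟩
    · exact fun h => hp (by simp only [h, zero_mul])
    · exact fun h => hp (by simp only [h, mul_zero])

lemma laurent_algebraMap [Algebra ℂ S] (c : ℂ) :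
    algebraMap ℂ (LaurentSeries S) c = HahnSeries.C (algebraMap ℂ S c) := by
  rw [HahnSeries.algebraMap_apply', PowerSeries.algebraMap_apply, HahnSeries.ofPowerSeries_C]

lemma phi_smul [Algebra ℂ S] {R : Type*} [CommRing R] [Algebra ℂ R]
    (Φ : R →ₐ[ℂ] LaurentSeries S) (c : ℂ) (a : R) (e : ℤ) :
    (Φ (c • a)).coeff e = c • (Φ a).coeff e := by
  rw [Algebra.smul_def, map_mul, AlgHom.commutes, laurent_algebraMap, HahnSeries.C_mul_eq_smul,
    HahnSeries.coeff_smul, algebraMap_smul]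

end laurent

lemma fin_smul {ι M : Type*} [AddCommGroup M] [Module ℂ M] (c : ι → ℂ) {f : ι → M}
    (hf : (Function.support f).Finite) : (Function.support fun i => c i • f i).Finite :=
  hf.subset fun i hi h0 => hi (by simp only [h0, smul_zero])

section main
variable {k m : ℕ} {α : Fin k → ℕ}

lemma phi_T (hm : 1 ≤ m)
    (T : Derivation ℂ (MvPolynomial (Fin k × ℕ) ℂ) (MvPolynomial (Fin k × ℕ) ℂ))
    (hT : ∀ (i : Fin k) (ℓ : ℕ),
      T (X (i, ℓ)) = ((ℓ : ℂ) + 1) • X (i, ℓ + 1))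
    (Φ : MvPolynomial (Fin k × ℕ) ℂ →ₐ[ℂ] LaurentSeries (MvPolynomial (TwIdx k m α) ℂ))
    (hΦ : ∀ (i : Fin k) (ℓ : ℕ) (e : ℤ),
      (Φ (X (i, ℓ))).coeff e =
        if h : 0 ≤ e + ℓ * m ∧ (e + ℓ * m).toNat % m = α i then
          (((ℓ.factorial : ℂ))⁻¹ *
            ∏ j ∈ Finset.range ℓ, (((e : ℂ) + (j + 1) * m) / m)) •
            X (⟨(i, (e + ℓ * m).toNat), h.2⟩ : TwIdx k m α)
        else 0)
    (a : MvPolynomial (Fin k × ℕ) ℂ) : ∀ e : ℤ,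
    (Φ (T a)).coeff e = (((e : ℂ) + m) / m) • (Φ a).coeff (e + m) := by
  have hm0 : (m : ℂ) ≠ 0 := by exact_mod_cast (by omega : m ≠ 0)
  induction a using MvPolynomial.induction_on with
  | C c =>
    intro e
    rw [← MvPolynomial.algebraMap_eq, Derivation.map_algebraMap, map_zero, AlgHom.commutes,
      laurent_algebraMap, HahnSeries.C_apply, HahnSeries.coeff_single]
    split_ifs with h
    · have : (e : ℂ) + m = 0 := by exact_mod_cast h
      simp [this]
    · simp
  | add p q hp hq =>
    intro e
    simp only [map_add, HahnSeries.coeff_add, hp, hq, smul_add]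
  | mul_X p n hp =>
    have hX : ∀ e : ℤ, (Φ (T (X n))).coeff e = (((e : ℂ) + m) / m) • (Φ (X n)).coeff (e + m) := by
      intro e
      obtain ⟨i, ℓ⟩ := n
      rw [hT, phi_smul, hΦ, hΦ]
      have he : e + ((ℓ + 1 : ℕ) : ℤ) * m = e + m + ℓ * m := by push_cast; ring
      simp only [he]
      split_ifs with h
      · rw [smul_smul, smul_smul]
        congr 1
        rw [Finset.prod_range_succ', Nat.factorial_succ]
        push_cast
        have : (ℓ : ℂ) + 1 ≠ 0 := by exact_mod_cast Nat.succ_ne_zero ℓ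
        have h3 : ∀ j : ℕ, ((e : ℂ) + (j + 1 + 1) * m) / m = (e + m + (j + 1) * m) / m := by
          intro j; ring
        simp only [h3]
        field_simp
        ring
      · simp
    intro e
    rw [Derivation.leibniz, smul_eq_mul, smul_eq_mul, map_add, map_mul, map_mul, map_mul,
      HahnSeries.coeff_add, mul_comm (Φ (X n)), laurent_coeff_mul, laurent_coeff_mul,
      laurent_coeff_mul, smul_finsum]
    have e1 : ∑ᶠ q : ℤ, (Φ (T p)).coeff q * (Φ (X n)).coeff (e - q)
        = ∑ᶠ q : ℤ, ((q : ℂ) / m) • ((Φ p).coeff q * (Φ (X n)).coeff (e + m - q)) := by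
      rw [← finsum_comp_equiv (Equiv.addRight (m : ℤ)) (f := fun q : ℤ => ((q : ℂ) / m) • ((Φ p).coeff q * (Φ (X n)).coeff (e + m - q)))]
      refine finsum_congr fun q => ?_
      rw [hp, Equiv.coe_addRight, smul_mul_assoc]
      push_cast
      rw [show e + (m : ℤ) - (q + m) = e - q by ring]
    have e2 : ∑ᶠ q : ℤ, (Φ p).coeff q * (Φ (T (X n))).coeff (e - q)
        = ∑ᶠ q : ℤ, (((e : ℂ) + m - q) / m) • ((Φ p).coeff q * (Φ (X n)).coeff (e + m - q)) := by
      refine finsum_congr fun q => ?_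
      rw [hX, mul_smul_comm]
      push_cast
      rw [show e - q + (m : ℤ) = e + m - q by ring, show (e : ℂ) - q + m = e + m - q by ring]
    have hf := laurent_fin (Φ p) (Φ (X n)) (e + m)
    rw [e1, e2, ← finsum_add_distrib]
    · refine finsum_congr fun q => ?_
      rw [← add_smul]
      congr 1
      ring
    · exact fin_smul _ hf
    · exact fin_smul _ hf

lemma phi_T_iter (hm : 1 ≤ m)
    (T : Derivation ℂ (MvPolynomial (Fin k × ℕ) ℂ) (MvPolynomial (Fin k × ℕ) ℂ))
    (Φ : MvPolynomial (Fin k × ℕ) ℂ →ₐ[ℂ] LaurentSeries (MvPolynomial (TwIdx k m α) ℂ))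
    (h : ∀ (a : MvPolynomial (Fin k × ℕ) ℂ) (e : ℤ),
      (Φ (T a)).coeff e = (((e : ℂ) + m) / m) • (Φ a).coeff (e + m)) (j : ℕ) :
    ∀ (a : MvPolynomial (Fin k × ℕ) ℂ) (e : ℤ),
    (Φ (((j.factorial : ℂ))⁻¹ • (⇑T)^[j] a)).coeff e
      = ((genBinom (((e + m * j : ℤ) : ℚ) / m) j : ℚ) : ℂ) • (Φ a).coeff (e + m * j) := by
  have hm0 : (m : ℂ) ≠ 0 := by exact_mod_cast (by omega : m ≠ 0)
  have key : ∀ (a : MvPolynomial (Fin k × ℕ) ℂ) (e : ℤ), (Φ ((⇑T)^[j] a)).coeff e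
      = (∏ t ∈ Finset.range j, (((e : ℂ) + m * j) / m - t)) • (Φ a).coeff (e + m * j) := by
    induction j with
    | zero => intro a e; simp
    | succ j ih =>
      intro a e
      rw [Function.iterate_succ_apply, ih, h, smul_smul, Finset.prod_range_succ']
      have : e + (m : ℤ) * j + m = e + m * (j + 1 : ℕ) := by push_cast; ring
      rw [this]
      congr 1
      push_cast
      congr 1
      · refine Finset.prod_congr rfl fun t _ => ?_
        field_simp
        ring
      · ring
  intro a e
  rw [phi_smul, key, smul_smul, genBinom]
  push_cast
  rw [div_eq_inv_mul (∏ x ∈ Finset.range j, _)]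

lemma phi_sigma (hm : 1 ≤ m)
    (ζ : ℂ) (hζ : IsPrimitiveRoot ζ m)
    (σ : MvPolynomial (Fin k × ℕ) ℂ ≃ₐ[ℂ] MvPolynomial (Fin k × ℕ) ℂ)
    (hσ : ∀ (i : Fin k) (ℓ : ℕ), σ (X (i, ℓ)) = ζ ^ (α i) • X (i, ℓ))
    (Φ : MvPolynomial (Fin k × ℕ) ℂ →ₐ[ℂ] LaurentSeries (MvPolynomial (TwIdx k m α) ℂ))
    (hΦ : ∀ (i : Fin k) (ℓ : ℕ) (e : ℤ),
      (Φ (X (i, ℓ))).coeff e =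
        if h : 0 ≤ e + ℓ * m ∧ (e + ℓ * m).toNat % m = α i then
          (((ℓ.factorial : ℂ))⁻¹ *
            ∏ j ∈ Finset.range ℓ, (((e : ℂ) + (j + 1) * m) / m)) •
            X (⟨(i, (e + ℓ * m).toNat), h.2⟩ : TwIdx k m α)
        else 0)
    (a : MvPolynomial (Fin k × ℕ) ℂ) : ∀ e : ℤ,
    (Φ (σ a)).coeff e = ζ ^ e • (Φ a).coeff e := by
  have hζ0 : ζ ≠ 0 := hζ.ne_zero (by omega)
  induction a using MvPolynomial.induction_on with
  | C c =>
    intro e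
    rw [← MvPolynomial.algebraMap_eq, AlgEquiv.commutes, AlgHom.commutes,
      laurent_algebraMap, HahnSeries.C_apply, HahnSeries.coeff_single]
    split_ifs with h
    · simp [h]
    · simp
  | add p q hp hq =>
    intro e
    simp only [map_add, HahnSeries.coeff_add, hp, hq, smul_add]
  | mul_X p n hp =>
    have hX : ∀ e : ℤ, (Φ (σ (X n))).coeff e = ζ ^ e • (Φ (X n)).coeff e := by
      intro e
      obtain ⟨i, ℓ⟩ := n
      rw [hσ, phi_smul, hΦ]
      split_ifs with h
      · congr 1
        rw [← h.2, ← zpow_natCast]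
        have h1 : (((e + ℓ * m).toNat % m : ℕ) : ℤ) = (e + ℓ * m) % m := by
          rw [Int.natCast_mod, Int.toNat_of_nonneg h.1]
        rw [h1, Int.add_mul_emod_self_right]
        have h2 := Int.emod_add_mul_ediv e m
        conv_rhs => rw [← h2]
        rw [zpow_add₀ hζ0, zpow_mul, zpow_natCast, hζ.pow_eq_one, one_zpow, mul_one]
      · simp
    intro e
    rw [map_mul, map_mul, map_mul, laurent_coeff_mul, laurent_coeff_mul, smul_finsum]
    refine finsum_congr fun q => ?_
    rw [hp, hX, smul_mul_smul_comm, ← zpow_add₀ hζ0]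
    congr 2
    ring

lemma phi_grade (hm : 1 ≤ m)
    (ζ : ℂ) (hζ : IsPrimitiveRoot ζ m)
    (σ : MvPolynomial (Fin k × ℕ) ℂ ≃ₐ[ℂ] MvPolynomial (Fin k × ℕ) ℂ)
    (Φ : MvPolynomial (Fin k × ℕ) ℂ →ₐ[ℂ] LaurentSeries (MvPolynomial (TwIdx k m α) ℂ))
    (a : MvPolynomial (Fin k × ℕ) ℂ)
    (h : ∀ e : ℤ, (Φ (σ a)).coeff e = ζ ^ e • (Φ a).coeff e)
    (r : ℤ) (ha : σ a = ζ ^ r • a) (e : ℤ) (he : (Φ a).coeff e ≠ 0) : (m : ℤ) ∣ e - r := by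
  have hζ0 : ζ ≠ 0 := hζ.ne_zero (by omega)
  have h1 := h e
  rw [ha, phi_smul] at h1
  have h2 := smul_left_injective ℂ he h1
  rw [← hζ.zpow_eq_one_iff_dvd, zpow_sub₀ hζ0, ← h2]
  exact div_self (zpow_ne_zero _ hζ0)

end main

/-- the twisted Borcherds identity for `ℂ[J^g 𝔸^k] = B_α` as a
`σ`-twisted module over the commutative vertex algebra `ℂ[J𝔸^k] = R_k`.  If
`σ(a) = ζ^r·a` and `σ(b) = ζ^{s'}·b`, then for all `μ, ν ∈ ℚ` with
`μ + r/m ∈ ℤ` and `ν + s'/m ∈ ℤ` (written `μ = u − r/m`, `ν = v − s'/m`, and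
encoded by the integers `nμ = mμ`, `nν = mν`) and all `l ∈ ℤ`, one has in
`B_α`:
`Σ_{i≥0} C(μ,i)·(a_{(l+i)}b)^M_{(μ+ν−i)}
  = Σ_{i≥0} (−1)^i·C(l,i)·(a^M_{(l+μ−i)}·b^M_{(ν+i)} + (−1)^{l+1}·b^M_{(l+ν−i)}·a^M_{(μ+i)})`,
with both sums having only finitely many nonzero terms. -/
theorem twisted_borcherds_identity_for_twisted_jets
    (k m : ℕ) (hk : 1 ≤ k) (hm : 1 ≤ m)
    (ζ : ℂ) (hζ : ζ = Complex.exp (2 * Real.pi * Complex.I / m))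
    (α : Fin k → ℕ) (hα : ∀ i, α i < m)
    (T : Derivation ℂ (MvPolynomial (Fin k × ℕ) ℂ) (MvPolynomial (Fin k × ℕ) ℂ))
    (hT : ∀ (i : Fin k) (ℓ : ℕ),
      T (X (i, ℓ)) = ((ℓ : ℂ) + 1) • X (i, ℓ + 1))
    (σ : MvPolynomial (Fin k × ℕ) ℂ ≃ₐ[ℂ] MvPolynomial (Fin k × ℕ) ℂ)
    (hσ : ∀ (i : Fin k) (ℓ : ℕ), σ (X (i, ℓ)) = ζ ^ (α i) • X (i, ℓ))
    (Φ : MvPolynomial (Fin k × ℕ) ℂ →ₐ[ℂ] LaurentSeries (MvPolynomial (TwIdx k m α) ℂ))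
    (hΦ : ∀ (i : Fin k) (ℓ : ℕ) (e : ℤ),
      (Φ (X (i, ℓ))).coeff e =
        if h : 0 ≤ e + ℓ * m ∧ (e + ℓ * m).toNat % m = α i then
          (((ℓ.factorial : ℂ))⁻¹ *
            ∏ j ∈ Finset.range ℓ, (((e : ℂ) + (j + 1) * m) / m)) •
            X (⟨(i, (e + ℓ * m).toNat), h.2⟩ : TwIdx k m α)
        else 0)
    (a b : MvPolynomial (Fin k × ℕ) ℂ) (r s' : ℤ)
    (ha : σ a = ζ ^ r • a) (hb : σ b = ζ ^ s' • b)
    (u v l : ℤ) :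
    -- `nμ := m*u − r` and `nν := m*v − s'` encode `μ = u − r/m`, `ν = v − s'/m`
    (Set.Finite (Function.support fun i : ℕ =>
      ((genBinom (((m : ℚ) * u - r) / m) i : ℚ) : ℂ) •
        twMode Φ (nProd T a (l + i) b) ((m * u - r) + (m * v - s') - m * i))) ∧
    (Set.Finite (Function.support fun i : ℕ =>
      ((-1 : ℂ) ^ i * ((genBinom (l : ℚ) i : ℚ) : ℂ)) •
        (twMode Φ a (m * l + (m * u - r) - m * i) * twMode Φ b ((m * v - s') + m * i)
          + (-1 : ℂ) ^ (l + 1) •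
            (twMode Φ b (m * l + (m * v - s') - m * i) *
              twMode Φ a ((m * u - r) + m * i))))) ∧
    (∑ᶠ i : ℕ, ((genBinom (((m : ℚ) * u - r) / m) i : ℚ) : ℂ) •
        twMode Φ (nProd T a (l + i) b) ((m * u - r) + (m * v - s') - m * i))
      = ∑ᶠ i : ℕ, ((-1 : ℂ) ^ i * ((genBinom (l : ℚ) i : ℚ) : ℂ)) •
          (twMode Φ a (m * l + (m * u - r) - m * i) * twMode Φ b ((m * v - s') + m * i)
            + (-1 : ℂ) ^ (l + 1) •
              (twMode Φ b (m * l + (m * v - s') - m * i) *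
                twMode Φ a ((m * u - r) + m * i))) := by
  have hprim : IsPrimitiveRoot ζ m := by
    rw [hζ]; exact Complex.isPrimitiveRoot_exp m (by omega)
  have hgr := phi_grade hm ζ hprim σ Φ a (phi_sigma hm ζ hprim σ hσ Φ hΦ a) r ha
  have hTi := phi_T_iter hm T Φ (phi_T hm T hT Φ hΦ)
  rcases le_or_gt 0 l with hl | hl
  · obtain ⟨n, rfl⟩ := Int.eq_ofNat_of_zero_le hl
    have h0 : ∀ i : ℕ, nProd T a ((n : ℤ) + i) b = 0 := fun i => by
      rw [nProd, if_pos (by positivity)]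
    have h1 : ∀ x, twMode Φ 0 x = 0 := fun x => by
      rw [twMode, map_zero]; rfl
    have hsub : (Function.support fun i : ℕ =>
      ((-1 : ℂ) ^ i * ((genBinom (((n : ℤ) : ℚ)) i : ℚ) : ℂ)) •
        (twMode Φ a (m * (n : ℤ) + (m * u - r) - m * i) * twMode Φ b ((m * v - s') + m * i)
          + (-1 : ℂ) ^ ((n : ℤ) + 1) •
            (twMode Φ b (m * (n : ℤ) + (m * v - s') - m * i) *
              twMode Φ a ((m * u - r) + m * i)))) ⊆ ((Finset.range (n + 1) : Finset ℕ) : Set ℕ) := by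
      intro i hi
      rw [Finset.coe_range, Set.mem_Iio]
      by_contra hlt
      refine hi ?_
      simp only [Int.cast_natCast]
      rw [genBinom_nat, Nat.choose_eq_zero_of_lt (by omega)]
      simp
    refine ⟨?_, (Finset.finite_toSet _).subset hsub, ?_⟩
    · simp [h0, h1]
    · rw [finsum_eq_sum_of_support_subset _ hsub]
      simp only [h0, h1, smul_zero, finsum_zero, smul_add, Finset.sum_add_distrib]
      rw [← Finset.sum_range_reflect (fun i : ℕ => ((-1 : ℂ) ^ i * ((genBinom (((n : ℤ) : ℚ)) i : ℚ) : ℂ)) •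
        (-1 : ℂ) ^ ((n : ℤ) + 1) • (twMode Φ b (m * (n : ℤ) + (m * v - s') - m * i) *
              twMode Φ a ((m * u - r) + m * i))), ← Finset.sum_add_distrib]
      refine (Finset.sum_eq_zero fun i hi => ?_).symm
      have hi' : i ≤ n := by have := Finset.mem_range.1 hi; omega
      obtain ⟨j, rfl⟩ := Nat.exists_eq_add_of_le hi'
      rw [show i + j + 1 - 1 - i = j by omega, smul_smul]
      simp only [Int.cast_natCast]
      rw [genBinom_nat, genBinom_nat]
      rw [show (m : ℤ) * ((i + j : ℕ) : ℤ) + (m * v - s') - m * j = m * v - s' + m * i by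
        push_cast; ring,
        show (m : ℤ) * ((i + j : ℕ) : ℤ) + (m * u - r) - m * i = m * u - r + m * j by
        push_cast; ring, mul_comm (twMode Φ b _), ← add_smul, Nat.choose_symm_add]
      rw [show (((i + j : ℕ) : ℤ) + 1) = ((i + j + 1 : ℕ) : ℤ) by push_cast; ring, zpow_natCast]
      convert zero_smul ℂ _ using 2
      have : ((-1 : ℂ) ^ j) * (-1) ^ j = 1 := by rw [← mul_pow]; simp
      rw [pow_succ, pow_add]
      linear_combination (-(-1 : ℂ) ^ i * (((i + j).choose j : ℚ) : ℂ)) * this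
  · obtain ⟨n, hn⟩ : ∃ n : ℕ, l = -(n + 1) := ⟨(-l - 1).toNat, by omega⟩
    subst hn
    have hm0 : (m : ℤ) ≠ 0 := by omega
    have hmQ : (m : ℚ) ≠ 0 := by exact_mod_cast hm0
    -- the summand on the whole lattice
    let Q : ℤ := m * n - m - (m * u - r) - (m * v - s')
    let G : ℤ → MvPolynomial (TwIdx k m α) ℂ := fun p => (Φ a).coeff p * (Φ b).coeff (Q - p)
    have hG : (Function.support G).Finite := laurent_fin (Φ a) (Φ b) Q
    let ι : ℤ → ℤ := fun N => m * N - (m * u - r)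
    have hι : Function.Injective ι := fun x y hxy => by
      have : (m : ℤ) * x = m * y := by simpa [ι] using hxy
      exact mul_left_cancel₀ hm0 this
    let F : ℤ → MvPolynomial (TwIdx k m α) ℂ := fun N => ((genBinom (N : ℚ) n : ℚ) : ℂ) • G (ι N)
    have hF : (Function.support F).Finite :=
      fin_smul _ (f := fun N => G (ι N)) (hG.preimage hι.injOn)
    -- left-hand side
    have hterm : ∀ i ∈ Finset.range (n + 1),
        twMode Φ (nProd T a (-((n : ℤ) + 1) + i) b) ((m * u - r) + (m * v - s') - m * i)
        = ∑ᶠ p : ℤ, ((genBinom ((p : ℚ) / m) (n - i) : ℚ) : ℂ) • G p := by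
      intro i hi
      have hi' : i ≤ n := by have := Finset.mem_range.1 hi; omega
      obtain ⟨j, rfl⟩ := Nat.exists_eq_add_of_le hi'
      rw [nProd, if_neg (by push_cast; omega), twMode, map_mul, laurent_coeff_mul]
      rw [show (-(-(((i + j : ℕ) : ℤ) + 1) + (i : ℤ)) - 1).toNat = j by push_cast; omega,
        show i + j - i = j by omega]
      rw [← finsum_comp_equiv (Equiv.addRight ((m : ℤ) * j))
        (f := fun p : ℤ => ((genBinom ((p : ℚ) / m) j : ℚ) : ℂ) • G p)]
      refine finsum_congr fun q => ?_
      rw [hTi, smul_mul_assoc, Equiv.coe_addRight]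
      simp only [G, Q]
      congr 3
      push_cast
      ring
    have hsubL : (Function.support fun i : ℕ =>
      ((genBinom (((m : ℚ) * u - r) / m) i : ℚ) : ℂ) •
        twMode Φ (nProd T a (-((n : ℤ) + 1) + i) b) ((m * u - r) + (m * v - s') - m * i))
        ⊆ ((Finset.range (n + 1) : Finset ℕ) : Set ℕ) := by
      intro i hi
      rw [Finset.coe_range, Set.mem_Iio]
      by_contra hlt
      refine hi ?_
      simp only
      rw [nProd, if_pos (by omega), twMode, map_zero]
      exact smul_zero _
    have hL : (∑ᶠ i : ℕ, ((genBinom (((m : ℚ) * u - r) / m) i : ℚ) : ℂ) •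
        twMode Φ (nProd T a (-((n : ℤ) + 1) + i) b) ((m * u - r) + (m * v - s') - m * i))
        = ∑ᶠ N : ℤ, F N := by
      rw [finsum_eq_sum_of_support_subset _ hsubL]
      rw [Finset.sum_congr rfl fun i hi => by rw [hterm i hi, smul_finsum]]
      rw [← finsum_sum_comm]
      · have h1 : ∀ p : ℤ, ∑ i ∈ Finset.range (n + 1),
            ((genBinom (((m : ℚ) * u - r) / m) i : ℚ) : ℂ) •
              ((genBinom ((p : ℚ) / m) (n - i) : ℚ) : ℂ) • G p
            = ((genBinom (((m : ℚ) * u - r) / m + (p : ℚ) / m) n : ℚ) : ℂ) • G p := by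
          intro p
          rw [genBinom_vandermonde]
          push_cast
          rw [Finset.sum_smul]
          exact Finset.sum_congr rfl fun i _ => smul_smul _ _ _
        rw [finsum_congr h1, ← finsum_mem_univ]
        rw [finsum_mem_inter_support_eq _ Set.univ (Set.range ι), finsum_mem_range hι]
        · refine finsum_congr fun N => ?_
          simp only [F]
          congr 3
          simp only [ι]
          push_cast
          field_simp
          ring
        · rw [Set.univ_inter, eq_comm, Set.inter_eq_right]
          intro p hp
          have hA : (Φ a).coeff p ≠ 0 := fun h => hp (by simp only [G, h, zero_mul, smul_zero])
          obtain ⟨c, hc⟩ := hgr p hA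
          refine ⟨c + u, ?_⟩
          simp only [ι]
          linear_combination -hc
      · intro i _
        exact fin_smul _ (fin_smul _ hG)
    -- right-hand side
    let ι₁ : ℕ → ℤ := fun i => n + i
    let ι₂ : ℕ → ℤ := fun i => -(i + 1)
    have hι₁ : Function.Injective ι₁ := fun x y h => by simp only [ι₁] at h; omega
    have hι₂ : Function.Injective ι₂ := fun x y h => by simp only [ι₂] at h; omega
    have hR : ∀ i : ℕ, ((-1 : ℂ) ^ i * ((genBinom ((-((n : ℤ) + 1) : ℤ) : ℚ) i : ℚ) : ℂ)) •
          (twMode Φ a (m * (-((n : ℤ) + 1)) + (m * u - r) - m * i) *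
              twMode Φ b ((m * v - s') + m * i)
            + (-1 : ℂ) ^ (-((n : ℤ) + 1) + 1) •
              (twMode Φ b (m * (-((n : ℤ) + 1)) + (m * v - s') - m * i) *
                twMode Φ a ((m * u - r) + m * i))) = F (ι₁ i) + F (ι₂ i) := by
      intro i
      have hc : (-1 : ℂ) ^ i * ((genBinom ((-((n : ℤ) + 1) : ℤ) : ℚ) i : ℚ) : ℂ)
          = ((n + i).choose n : ℂ) := by
        have : ((-1 : ℂ) ^ i) * (-1) ^ i = 1 := by rw [← mul_pow]; simp
        push_cast
        rw [genBinom_neg, show (n : ℚ) + 1 + i - 1 = ((n + i : ℕ) : ℚ) by push_cast; ring,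
          genBinom_nat, Nat.choose_symm_add]
        push_cast
        linear_combination ((n + i).choose i : ℂ) * this
      have hc1 : ((genBinom ((ι₁ i : ℤ) : ℚ) n : ℚ) : ℂ) = ((n + i).choose n : ℂ) := by
        rw [show ((ι₁ i : ℤ) : ℚ) = ((n + i : ℕ) : ℚ) by simp [ι₁], genBinom_nat]
        push_cast
        rfl
      have hc2 : ((genBinom ((ι₂ i : ℤ) : ℚ) n : ℚ) : ℂ) = (-1) ^ n * ((n + i).choose n : ℂ) := by
        rw [show ((ι₂ i : ℤ) : ℚ) = -((i : ℚ) + 1) by simp [ι₂], genBinom_neg,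
          show (i : ℚ) + 1 + n - 1 = ((n + i : ℕ) : ℚ) by push_cast; ring, genBinom_nat]
        push_cast
        rfl
      have hs : (-1 : ℂ) ^ (-((n : ℤ) + 1) + 1) = (-1) ^ n := by
        rw [show -((n : ℤ) + 1) + 1 = -(n : ℤ) by ring, zpow_neg, zpow_natCast, ← inv_pow]
        norm_num
      simp only [F]
      rw [hc, hc1, hc2, hs, smul_add, smul_smul, mul_comm ((-1 : ℂ) ^ n)]
      congr 2
      · simp only [G, Q, ι, ι₁, twMode]
        congr 2 <;> ring
      · rw [mul_comm]
        simp only [G, Q, ι, ι₂, twMode]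
        congr 2 <;> ring
    have hF1 : (Function.support fun i => F (ι₁ i)).Finite := hF.preimage hι₁.injOn
    have hF2 : (Function.support fun i => F (ι₂ i)).Finite := hF.preimage hι₂.injOn
    refine ⟨(Finset.finite_toSet _).subset hsubL, ?_, ?_⟩
    · simp only [hR]
      exact (hF1.union hF2).subset (Function.support_add _ _)
    · rw [hL, finsum_congr hR, finsum_add_distrib hF1 hF2, ← finsum_mem_range hι₁,
        ← finsum_mem_range hι₂, ← finsum_mem_union', ← finsum_mem_univ]
      · refine finsum_mem_inter_support_eq _ _ _ ?_
        rw [Set.univ_inter, eq_comm, Set.inter_eq_right]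
        intro N hN
        by_contra hnot
        refine hN ?_
        have h1 : ¬ ((n : ℤ) ≤ N) := fun h => hnot (Or.inl ⟨(N - n).toNat, by simp only [ι₁]; omega⟩)
        have h2 : ¬ (N < 0) := fun h => hnot (Or.inr ⟨(-N - 1).toNat, by simp only [ι₂]; omega⟩)
        obtain ⟨M, rfl⟩ := Int.eq_ofNat_of_zero_le (not_lt.1 h2)
        simp only [F, Int.cast_natCast]
        rw [genBinom_nat, Nat.choose_eq_zero_of_lt (by omega)]
        simp
      · rw [Set.disjoint_left]
        rintro _ ⟨x, rfl⟩ ⟨y, hy⟩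
        simp only [ι₁, ι₂] at hy
        omega
      · exact hF.subset Set.inter_subset_right
      · exact hF.subset Set.inter_subset_right
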